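/- arXiv:1903.03331 — 2 statements merged into one kernel-verified Lean document; each statement's English description precedes it below -/
import Mathlib

section
/- Let A and B be worms and φ any GLP formula. If ⊢_GLP A → B, then ⊢_GLP Q(A,φ) → Q(B,φ). -/
/-- Formulas of polymodal provability logic GLP: propositional variables, ⊤,
Boolean connectives, and a modality `[ξ]` for each ordinal `ξ`. -/
inductive GLPFormula : Type 1 where
  | var : ℕ → GLPFormula
  | top : GLPFormula
  | neg : GLPFormula → GLPFormula
  | and : GLPFormula → GLPFormula → GLPFormula
  | imp : GLPFormula → GLPFormula → GLPFormula
  | box : Ordinal → GLPFormula → GLPFormula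

namespace GLPFormula

/-- `⟨ξ⟩φ` abbreviates `¬[ξ]¬φ`. -/
def dia (ξ : Ordinal) (φ : GLPFormula) : GLPFormula := neg (box ξ (neg φ))

/-- Biconditional, defined from the other connectives. -/
def biimp (φ ψ : GLPFormula) : GLPFormula := and (imp φ ψ) (imp ψ φ)

/-- The set of ordinals occurring as modality indices in a formula. -/
def mods : GLPFormula → Set Ordinal
  | var _ => ∅
  | top => ∅
  | neg φ => mods φ
  | and φ ψ => mods φ ∪ mods ψ
  | imp φ ψ => mods φ ∪ mods ψ
  | box ξ φ => insert ξ (mods φ)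

end GLPFormula

/-- A propositional tautology: true under every Boolean valuation that respects
the Boolean connectives (variables and boxed formulas are treated as atoms). -/
def IsTautology (φ : GLPFormula) : Prop :=
  ∀ v : GLPFormula → Bool,
    v GLPFormula.top = true →
    (∀ ψ, v ψ.neg = !v ψ) →
    (∀ ψ χ, v (ψ.and χ) = (v ψ && v χ)) →
    (∀ ψ χ, v (ψ.imp χ) = (!v ψ || v χ)) →
    v φ = true

/-- Derivability in GLP, with modality indices restricted to the set `S`
(`S = Set.univ` gives full GLP; `S = Set.Iio ω` gives GLP_ω). -/
inductive GLPProof (S : Set Ordinal) : GLPFormula → Prop where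
  | taut {φ} : φ.mods ⊆ S → IsTautology φ → GLPProof S φ
  | distr {ξ φ ψ} : ξ ∈ S → φ.mods ⊆ S → ψ.mods ⊆ S →
      GLPProof S ((GLPFormula.box ξ (φ.imp ψ)).imp
        ((GLPFormula.box ξ φ).imp (GLPFormula.box ξ ψ)))
  | trans {ξ φ} : ξ ∈ S → φ.mods ⊆ S →
      GLPProof S ((GLPFormula.box ξ φ).imp (GLPFormula.box ξ (GLPFormula.box ξ φ)))
  | lob {ξ φ} : ξ ∈ S → φ.mods ⊆ S →
      GLPProof S ((GLPFormula.box ξ ((GLPFormula.box ξ φ).imp φ)).imp (GLPFormula.box ξ φ))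
  | negIntro {ξ ζ φ} : ξ < ζ → ξ ∈ S → ζ ∈ S → φ.mods ⊆ S →
      GLPProof S ((GLPFormula.dia ζ φ).imp (GLPFormula.dia ξ φ))
  | mono {ξ ζ φ} : ξ < ζ → ξ ∈ S → ζ ∈ S → φ.mods ⊆ S →
      GLPProof S ((GLPFormula.dia ξ φ).imp (GLPFormula.box ζ (GLPFormula.dia ξ φ)))
  | mp {φ ψ} : GLPProof S (φ.imp ψ) → GLPProof S φ → GLPProof S ψ
  | nec {ξ φ} : ξ ∈ S → GLPProof S φ → GLPProof S (GLPFormula.box ξ φ)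

/-- Derivability in full GLP (modalities indexed by all ordinals). -/
def GLPProves (φ : GLPFormula) : Prop := GLPProof Set.univ φ

/-- Derivability in GLP_ω (modalities indexed by natural numbers). -/
def GLPomegaProves (φ : GLPFormula) : Prop := GLPProof (Set.Iio Ordinal.omega0) φ

/-- A GLP_ω formula: all modality indices are below ω. -/
def IsOmegaFormula (φ : GLPFormula) : Prop := φ.mods ⊆ Set.Iio Ordinal.omega0

/-- Conjunction of a finite list of formulas. -/
def listConj : List GLPFormula → GLPFormula
  | [] => GLPFormula.top
  | φ :: l => φ.and (listConj l)

/-- `SetProves S τ χ`: the set `τ` proves `χ`, i.e. `ψ₁ ∧ … ∧ ψₘ → χ` is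
derivable for some finite list of members of `τ`. -/
def SetProves (S : Set Ordinal) (τ : Set GLPFormula) (χ : GLPFormula) : Prop :=
  ∃ l : List GLPFormula, (∀ ψ ∈ l, ψ ∈ τ) ∧ GLPProof S ((listConj l).imp χ)

/-- The iterated consistency formulas: `Q n 0 φ = ⊤`, `Q n (k+1) φ = ⟨n⟩(φ ∧ Q n k φ)`. -/
def Q (n : Ordinal) : ℕ → GLPFormula → GLPFormula
  | 0, _ => GLPFormula.top
  | k + 1, φ => GLPFormula.dia n ((GLPFormula.and φ (Q n k φ)))

/-- `diaPow n k φ` is `⟨n⟩^k φ`, `k` iterated applications of `⟨n⟩`. -/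
def diaPow (n : Ordinal) : ℕ → GLPFormula → GLPFormula
  | 0, φ => φ
  | k + 1, φ => GLPFormula.dia n (diaPow n k φ)

/-- The formula corresponding to a worm, given as its list of modality indices:
`[] ↦ ⊤` and `γ :: A ↦ ⟨γ⟩A`. -/
def wormFormula : List Ordinal → GLPFormula
  | [] => GLPFormula.top
  | γ :: A => GLPFormula.dia γ (wormFormula A)

/-- The generalized `Q`-formula: `Q(⊤,φ) = ⊤`, `Q(⟨γ⟩A, φ) = ⟨γ⟩(φ ∧ Q(A,φ))`. -/
def QWorm : List Ordinal → GLPFormula → GLPFormula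
  | [], _ => GLPFormula.top
  | γ :: A, φ => GLPFormula.dia γ (GLPFormula.and φ (QWorm A φ))

namespace GLPAux
open GLPFormula

/-- Relativization: `[ξ]ψ` becomes `[ξ](φ → ψ)`. -/
def rel (φ : GLPFormula) : GLPFormula → GLPFormula
  | var n => var n
  | top => top
  | neg ψ => neg (rel φ ψ)
  | GLPFormula.and ψ χ => GLPFormula.and (rel φ ψ) (rel φ χ)
  | imp ψ χ => imp (rel φ ψ) (rel φ χ)
  | box ξ ψ => box ξ (imp φ (rel φ ψ))

theorem tt {φ : GLPFormula} (h : IsTautology φ) : GLPProves φ :=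
  GLPProof.taut (Set.subset_univ _) h

theorem mp1 {a b : GLPFormula} (ha : GLPProves a) (h : IsTautology (a.imp b)) : GLPProves b :=
  GLPProof.mp (tt h) ha

theorem mp2 {a b c : GLPFormula} (ha : GLPProves a) (hb : GLPProves b)
    (h : IsTautology (a.imp (b.imp c))) : GLPProves c :=
  GLPProof.mp (GLPProof.mp (tt h) ha) hb

theorem mp3 {a b c d : GLPFormula} (ha : GLPProves a) (hb : GLPProves b) (hc : GLPProves c)
    (h : IsTautology (a.imp (b.imp (c.imp d)))) : GLPProves d :=
  GLPProof.mp (GLPProof.mp (GLPProof.mp (tt h) ha) hb) hc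

theorem boxMono (ξ : Ordinal) {a b : GLPFormula} (h : GLPProves (a.imp b)) :
    GLPProves ((box ξ a).imp (box ξ b)) :=
  GLPProof.mp (GLPProof.distr trivial (Set.subset_univ _) (Set.subset_univ _))
    (GLPProof.nec trivial h)

theorem rel_sound (φ : GLPFormula) {ψ : GLPFormula} (h : GLPProves ψ) :
    GLPProves (rel φ ψ) := by
  unfold GLPProves at h
  induction h with
  | taut _ h =>
    apply tt
    intro v h1 h2 h3 h4
    exact h (fun ψ => v (rel φ ψ)) h1 (fun _ => h2 _) (fun _ _ => h3 _ _) (fun _ _ => h4 _ _)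
  | @distr ξ a b _ _ _ =>
    have h1 : GLPProves ((box ξ (φ.imp ((rel φ a).imp (rel φ b)))).imp
        (box ξ ((φ.imp (rel φ a)).imp (φ.imp (rel φ b))))) :=
      boxMono ξ (tt (by intro v h1 h2 h3 h4; simp only [h2, h3, h4]; grind))
    have h2 : GLPProves ((box ξ ((φ.imp (rel φ a)).imp (φ.imp (rel φ b)))).imp
        ((box ξ (φ.imp (rel φ a))).imp (box ξ (φ.imp (rel φ b))))) :=
      GLPProof.distr trivial (Set.subset_univ _) (Set.subset_univ _)
    exact mp2 h1 h2 (by intro v h1 h2 h3 h4; simp only [rel, h2, h3, h4]; grind)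
  | @trans ξ a _ _ =>
    have h1 : GLPProves ((box ξ (φ.imp (rel φ a))).imp (box ξ (box ξ (φ.imp (rel φ a))))) :=
      GLPProof.trans trivial (Set.subset_univ _)
    have h2 : GLPProves ((box ξ (box ξ (φ.imp (rel φ a)))).imp
        (box ξ (φ.imp (box ξ (φ.imp (rel φ a)))))) :=
      boxMono ξ (tt (by intro v h1 h2 h3 h4; simp only [h2, h3, h4]; grind))
    exact mp2 h1 h2 (by intro v h1 h2 h3 h4; simp only [rel, h2, h3, h4]; grind)
  | @lob ξ a _ _ =>
    have h1 : GLPProves ((box ξ ((box ξ (φ.imp (rel φ a))).imp (φ.imp (rel φ a)))).imp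
        (box ξ (φ.imp (rel φ a)))) :=
      GLPProof.lob trivial (Set.subset_univ _)
    have h2 : GLPProves ((box ξ (φ.imp ((box ξ (φ.imp (rel φ a))).imp (rel φ a)))).imp
        (box ξ ((box ξ (φ.imp (rel φ a))).imp (φ.imp (rel φ a))))) :=
      boxMono ξ (tt (by intro v h1 h2 h3 h4; simp only [h2, h3, h4]; grind))
    exact mp2 h1 h2 (by intro v h1 h2 h3 h4; simp only [rel, h2, h3, h4]; grind)
  | @negIntro ξ ζ a hlt _ _ _ =>
    have h1 : GLPProves ((dia ζ (φ.and (rel φ a))).imp (dia ξ (φ.and (rel φ a)))) :=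
      GLPProof.negIntro hlt trivial trivial (Set.subset_univ _)
    have h2 : GLPProves ((box ζ (neg (φ.and (rel φ a)))).imp (box ζ (φ.imp (rel φ a).neg))) :=
      boxMono ζ (tt (by intro v h1 h2 h3 h4; simp only [h2, h3, h4]; grind))
    have h3 : GLPProves ((box ξ (φ.imp (rel φ a).neg)).imp (box ξ (neg (φ.and (rel φ a))))) :=
      boxMono ξ (tt (by intro v h1 h2 h3 h4; simp only [h2, h3, h4]; grind))
    exact mp3 h1 h2 h3 (by intro v h1 h2 h3 h4; simp only [rel, dia, h2, h3, h4]; grind)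
  | @mono ξ ζ a hlt _ _ _ =>
    have h1 : GLPProves ((dia ξ (φ.and (rel φ a))).imp (box ζ (dia ξ (φ.and (rel φ a))))) :=
      GLPProof.mono hlt trivial trivial (Set.subset_univ _)
    have h2 : GLPProves ((box ξ (neg (φ.and (rel φ a)))).imp (box ξ (φ.imp (rel φ a).neg))) :=
      boxMono ξ (tt (by intro v h1 h2 h3 h4; simp only [h2, h3, h4]; grind))
    have h3 : GLPProves ((box ξ (φ.imp (rel φ a).neg)).imp (box ξ (neg (φ.and (rel φ a))))) :=
      boxMono ξ (tt (by intro v h1 h2 h3 h4; simp only [h2, h3, h4]; grind))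
    have h4 : GLPProves ((box ζ (dia ξ (φ.and (rel φ a)))).imp
        (box ζ (φ.imp (neg (box ξ (φ.imp (rel φ a).neg)))))) :=
      boxMono ζ (mp1 h3 (by intro v h1 h2 h3 h4; simp only [dia, h2, h3, h4]; grind))
    exact mp3 h1 h2 h4 (by intro v h1 h2 h3 h4; simp only [rel, dia, h2, h3, h4]; grind)
  | mp _ _ ih1 ih2 => exact GLPProof.mp ih1 ih2
  | nec _ _ ih =>
    exact GLPProof.nec trivial
      (mp1 ih (by intro v h1 h2 h3 h4; simp only [h4]; grind))

theorem rel_worm (φ : GLPFormula) (A : List Ordinal) :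
    GLPProves ((rel φ (wormFormula A)).imp (QWorm A φ)) ∧
    GLPProves ((QWorm A φ).imp (rel φ (wormFormula A))) := by
  induction A with
  | nil =>
    constructor <;> exact tt (by intro v h1 h2 h3 h4; simp [rel, wormFormula, QWorm, h1, h4])
  | cons γ A ih =>
    obtain ⟨i1, i2⟩ := ih
    constructor
    · have := boxMono γ (a := neg (φ.and (QWorm A φ))) (b := φ.imp (neg (rel φ (wormFormula A))))
        (mp1 i1 (by intro v h1 h2 h3 h4; simp only [h2, h3, h4]; grind))
      exact mp1 this
        (by intro v h1 h2 h3 h4; simp only [rel, wormFormula, QWorm, dia, h2, h3, h4]; grind)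
    · have := boxMono γ (a := φ.imp (neg (rel φ (wormFormula A)))) (b := neg (φ.and (QWorm A φ)))
        (mp1 i2 (by intro v h1 h2 h3 h4; simp only [h2, h3, h4]; grind))
      exact mp1 this
        (by intro v h1 h2 h3 h4; simp only [rel, wormFormula, QWorm, dia, h2, h3, h4]; grind)

end GLPAux

/-- If `⊢_GLP A → B` for worms `A`, `B`, then `⊢_GLP Q(A,φ) → Q(B,φ)`. -/
theorem QWorm_monotone (A B : List Ordinal) (φ : GLPFormula)
    (h : GLPProves ((wormFormula A).imp (wormFormula B))) :
    GLPProves ((QWorm A φ).imp (QWorm B φ)) := by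
  exact GLPAux.mp3 (GLPAux.rel_worm φ A).2 (GLPAux.rel_sound φ h) (GLPAux.rel_worm φ B).1
    (by intro v h1 h2 h3 h4; simp only [GLPAux.rel, h4]; grind)
end

section
/- For any GLP formulas ψ and χ: if ⊢_GLP ψ, then ⊢_GLP ψ^χ, where ψ^χ is the formula obtained from ψ by replacing every subformula of the form [ξ]ψ' by [ξ](χ → ψ'). -/
/-- `ψ^χ`: the result of replacing every subformula `[ξ]ψ'` of `ψ` by `[ξ](χ → ψ')`. -/
def relativize (χ : GLPFormula) : GLPFormula → GLPFormula
  | .var p => .var p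
  | .top => .top
  | .neg φ => .neg (relativize χ φ)
  | .and φ ψ => .and (relativize χ φ) (relativize χ ψ)
  | .imp φ ψ => .imp (relativize χ φ) (relativize χ ψ)
  | .box ξ φ => .box ξ (χ.imp (relativize χ φ))

theorem glp_taut {φ : GLPFormula} (h : IsTautology φ) : GLPProof Set.univ φ :=
  .taut (Set.subset_univ _) h

theorem glp_reg {φ ψ : GLPFormula} (ξ : Ordinal) (h : GLPProof Set.univ (φ.imp ψ)) :
    GLPProof Set.univ ((GLPFormula.box ξ φ).imp (GLPFormula.box ξ ψ)) :=
  .mp (.distr trivial (Set.subset_univ _) (Set.subset_univ _)) (.nec trivial h)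

theorem glp_syll {φ ψ χ : GLPFormula} (h1 : GLPProof Set.univ (φ.imp ψ))
    (h2 : GLPProof Set.univ (ψ.imp χ)) : GLPProof Set.univ (φ.imp χ) := by
  refine .mp (.mp (glp_taut (φ := (φ.imp ψ).imp ((ψ.imp χ).imp (φ.imp χ))) ?_) h1) h2
  intro v ht hn ha hi
  simp only [hi]
  cases v φ <;> cases v ψ <;> cases v χ <;> rfl

theorem glp_contra {φ ψ : GLPFormula} (h1 : GLPProof Set.univ (φ.imp ψ)) :
    GLPProof Set.univ (ψ.neg.imp φ.neg) := by
  refine .mp (glp_taut (φ := (φ.imp ψ).imp (ψ.neg.imp φ.neg)) ?_) h1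
  intro v ht hn ha hi
  simp only [hi, hn]
  cases v φ <;> cases v ψ <;> rfl

theorem glp_dn (φ : GLPFormula) : GLPProof Set.univ (φ.imp φ.neg.neg) := by
  refine glp_taut ?_
  intro v ht hn ha hi
  simp only [hi, hn]
  cases v φ <;> rfl

theorem glp_dn' (φ : GLPFormula) : GLPProof Set.univ (φ.neg.neg.imp φ) := by
  refine glp_taut ?_
  intro v ht hn ha hi
  simp only [hi, hn]
  cases v φ <;> rfl

theorem glp_weak (φ χ : GLPFormula) : GLPProof Set.univ (φ.imp (χ.imp φ)) := by
  refine glp_taut ?_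
  intro v ht hn ha hi
  simp only [hi]
  cases v φ <;> cases v χ <;> rfl

/-- If `⊢_GLP ψ` then `⊢_GLP ψ^χ`. -/
theorem relativize_provable (ψ χ : GLPFormula) (h : GLPProves ψ) :
    GLPProves (relativize χ ψ) := by
  unfold GLPProves at *
  induction h with
  | taut _ h =>
    refine glp_taut ?_
    intro v ht hn ha hi
    exact h (fun φ => v (relativize χ φ)) ht (fun _ => hn _) (fun _ _ => ha _ _)
      (fun _ _ => hi _ _)
  | @distr ξ φ ψ _ _ _ =>
    refine glp_syll (glp_reg ξ (glp_taut ?_))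
      (.distr trivial (Set.subset_univ _) (Set.subset_univ _))
    intro v ht hn ha hi
    simp only [hi, relativize]
    cases v χ <;> cases v (relativize χ φ) <;> cases v (relativize χ ψ) <;> rfl
  | @trans ξ φ _ _ =>
    exact glp_syll (.trans trivial (Set.subset_univ _)) (glp_reg ξ (glp_weak _ _))
  | @lob ξ φ _ _ =>
    refine glp_syll (glp_reg ξ (glp_taut ?_)) (.lob trivial (Set.subset_univ _))
    intro v ht hn ha hi
    simp only [hi, relativize]
    cases v χ <;> cases v (relativize χ φ) <;>
      cases v (GLPFormula.box ξ (χ.imp (relativize χ φ))) <;> rfl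
  | @negIntro ξ ζ φ hlt _ _ _ =>
    exact glp_syll (glp_contra (glp_reg ζ (glp_dn' _)))
      (glp_syll (.negIntro hlt trivial trivial (Set.subset_univ _))
        (glp_contra (glp_reg ξ (glp_dn _))))
  | @mono ξ ζ φ hlt _ _ _ =>
    exact glp_syll (glp_contra (glp_reg ξ (glp_dn' _)))
      (glp_syll (.mono hlt trivial trivial (Set.subset_univ _))
        (glp_reg ζ (glp_syll (glp_contra (glp_reg ξ (glp_dn _))) (glp_weak _ _))))
  | mp _ _ ih1 ih2 => exact .mp ih1 ih2
  | nec _ _ ih => exact .nec trivial (.mp (glp_weak _ _) ih)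
end
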